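/- Let S be a commutative semiring containing elements s, t, s', t' ∈ S such that s·t ≠ 0, s'·t' ≠ 0, s·t' = 0, and s'·t = 0, and let Σ = {a, b} be a two-letter alphabet. Consider the series r : Σ* → S defined by r(aba) = s·t, r(bb) = s'·t', and r(w) = 0 for all other words w. Then r is the behaviour of some weighted automaton over S with exactly 4 states, while every bideterministic weighted automaton over S whose behaviour equals r has at least 5 states. -/

import Mathlib

/-- A weighted automaton over a semiring `S` and alphabet `α`:
a finite type of states `Q`, a transition weighting `σ`, an initial
weighting `ι` and a terminal weighting `τ`. -/
structure WeightedAutomaton (S : Type) [Semiring S] (α : Type) : Type 1 where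
  Q : Type
  [fintypeQ : Fintype Q]
  σ : Q → α → Q → S
  ι : Q → S
  τ : Q → S

namespace WeightedAutomaton

attribute [instance] fintypeQ

variable {S : Type} [Semiring S] {α : Type}

/-- The "future" of a state on a word: the sum, over all runs from this state
upon the word, of the product of the transition weights times the terminal
weight of the last state.  (Sequences of states using a zero-weight transition
contribute zero, so this is exactly the sum over runs.) -/
def future (A : WeightedAutomaton S α) : List α → A.Q → S
  | [], q => A.τ q
  | c :: w, q => ∑ p : A.Q, A.σ q c p * A.future w p

/-- The behaviour of a weighted automaton: the series sending each word `w`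
to the sum of the monomial weights `ι(q₀)·σ(q₀,c₁,q₁)⋯σ(q_{n−1},cₙ,qₙ)·τ(qₙ)`
of all runs of the automaton upon `w`. -/
def behaviour (A : WeightedAutomaton S α) (w : List α) : S :=
  ∑ q : A.Q, A.ι q * A.future w q

/-- A weighted automaton is bideterministic if at most one state has nonzero
initial weight, at most one state has nonzero terminal weight, and for every
letter each state has at most one outgoing and at most one incoming transition
with nonzero weight upon that letter. -/
def Bideterministic (A : WeightedAutomaton S α) : Prop :=
  (∀ p q, A.ι p ≠ 0 → A.ι q ≠ 0 → p = q) ∧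
  (∀ p q, A.τ p ≠ 0 → A.τ q ≠ 0 → p = q) ∧
  (∀ p c q q', A.σ p c q ≠ 0 → A.σ p c q' ≠ 0 → q = q') ∧
  (∀ p p' c q, A.σ p c q ≠ 0 → A.σ p' c q ≠ 0 → p = p')

/-- `A.IsPath q l` : starting in state `q`, the list `l` of (letter, next state)
pairs follows transitions all of which have nonzero weight, i.e. it is a run. -/
def IsPath (A : WeightedAutomaton S α) : A.Q → List (α × A.Q) → Prop
  | _, [] => True
  | q, (c, q') :: l => A.σ q c q' ≠ 0 ∧ A.IsPath q' l

/-- The last state of a path. -/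
def pathEnd (A : WeightedAutomaton S α) : A.Q → List (α × A.Q) → A.Q
  | q, [] => q
  | _, (_, q') :: l => A.pathEnd q' l

/-- The product of the transition weights along a path. -/
def pathWeight (A : WeightedAutomaton S α) : A.Q → List (α × A.Q) → S
  | _, [] => 1
  | q, (c, q') :: l => A.σ q c q' * A.pathWeight q' l

/-- A state is accessible if some run from a state with nonzero initial weight
ends in it. -/
def Accessible (A : WeightedAutomaton S α) (q : A.Q) : Prop :=
  ∃ p l, A.ι p ≠ 0 ∧ A.IsPath p l ∧ A.pathEnd p l = q

/-- A state is coaccessible if some run from it ends in a state with nonzero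
terminal weight. -/
def Coaccessible (A : WeightedAutomaton S α) (q : A.Q) : Prop :=
  ∃ l, A.IsPath q l ∧ A.τ (A.pathEnd q l) ≠ 0

/-- A weighted automaton is trim if all its states are accessible and
coaccessible. -/
def Trim (A : WeightedAutomaton S α) : Prop :=
  ∀ q, A.Accessible q ∧ A.Coaccessible q

/-- A weighted automaton is semantically trim if every state lies on some run
whose monomial weight is nonzero. -/
def SemanticallyTrim (A : WeightedAutomaton S α) : Prop :=
  ∀ q, ∃ p l, A.IsPath p l ∧ (q = p ∨ q ∈ l.map Prod.snd) ∧
    A.ι p * A.pathWeight p l * A.τ (A.pathEnd p l) ≠ 0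

/-- The number of states of a weighted automaton. -/
def states (A : WeightedAutomaton S α) : ℕ := Fintype.card A.Q

/-- A weighted automaton is minimal if every weighted automaton over the same
semiring and alphabet with the same behaviour has at least as many states. -/
def Minimal (A : WeightedAutomaton S α) : Prop :=
  ∀ B : WeightedAutomaton S α, B.behaviour = A.behaviour → A.states ≤ B.states

end WeightedAutomaton

/-!
Over a commutative semiring, the weight of a run containing a loop is the weight of the loop times
that of the run left after removing it. In a deterministic automaton the latter, if nonzero, is the
behaviour upon the shortened word; hence a run of nonzero weight repeats no state if no proper
scattered subword of its word lies in the support. This applies to `aba` and `bb`. In a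
bideterministic automaton their runs share the first state `p` and the last state `q₃`: they are
`p, q₁, q₂, q₃` and `p, r, q₃`. Determinism on `b` rules out `r = q₁`, codeterminism on `b` rules
out `r = q₂`, and five states remain. Without bideterminism `r` and `q₂` can be merged, since the
relations `s * t' = 0` and `s' * t = 0` annihilate the two runs upon `abb` and `ba` this creates.
-/

namespace WeightedAutomaton

section Runs

variable {S : Type} [Semiring S] {α : Type} (A : WeightedAutomaton S α)

/-- The monomial weight of the run that starts in `p` and follows `l`. It vanishes when `l` uses
a transition of weight zero, so `l` is not required to satisfy `IsPath`. -/
def runWeight (p : A.Q) (l : List (α × A.Q)) : S :=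
  A.ι p * A.pathWeight p l * A.τ (A.pathEnd p l)

/-- The forward half of bideterminism: at most one initial state, and at most one transition from
each state upon each letter. -/
def Deterministic : Prop :=
  (∀ p q, A.ι p ≠ 0 → A.ι q ≠ 0 → p = q) ∧
  (∀ p c q q', A.σ p c q ≠ 0 → A.σ p c q' ≠ 0 → q = q')

variable {A}

theorem Bideterministic.deterministic (hA : A.Bideterministic) : A.Deterministic :=
  ⟨hA.1, hA.2.2.1⟩

theorem pathEnd_append (p : A.Q) (l m : List (α × A.Q)) :
    A.pathEnd p (l ++ m) = A.pathEnd (A.pathEnd p l) m := by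
  induction l generalizing p with
  | nil => rfl
  | cons x _ ih => exact ih x.2

theorem pathWeight_append (p : A.Q) (l m : List (α × A.Q)) :
    A.pathWeight p (l ++ m) = A.pathWeight p l * A.pathWeight (A.pathEnd p l) m := by
  induction l generalizing p with
  | nil => exact (one_mul _).symm
  | cons x l ih => simp only [List.cons_append, pathWeight, pathEnd, ih, mul_assoc]

theorem isPath_of_pathWeight_ne_zero {p : A.Q} {l : List (α × A.Q)}
    (h : A.pathWeight p l ≠ 0) : A.IsPath p l := by
  induction l generalizing p with
  | nil => trivial
  | cons x l ih => exact ⟨left_ne_zero_of_mul h, ih (right_ne_zero_of_mul h)⟩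

theorem ι_ne_zero_of_runWeight_ne_zero {p : A.Q} {l : List (α × A.Q)}
    (h : A.runWeight p l ≠ 0) : A.ι p ≠ 0 :=
  left_ne_zero_of_mul (left_ne_zero_of_mul h)

theorem isPath_of_runWeight_ne_zero {p : A.Q} {l : List (α × A.Q)}
    (h : A.runWeight p l ≠ 0) : A.IsPath p l :=
  isPath_of_pathWeight_ne_zero (right_ne_zero_of_mul (left_ne_zero_of_mul h))

theorem τ_ne_zero_of_runWeight_ne_zero {p : A.Q} {l : List (α × A.Q)}
    (h : A.runWeight p l ≠ 0) : A.τ (A.pathEnd p l) ≠ 0 :=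
  right_ne_zero_of_mul h

theorem exists_pathWeight_ne_zero_of_mul_future_ne_zero {x : S} {w : List α} {p : A.Q}
    (h : x * A.future w p ≠ 0) :
    ∃ l : List (α × A.Q), l.map Prod.fst = w ∧
      x * A.pathWeight p l * A.τ (A.pathEnd p l) ≠ 0 := by
  induction w generalizing x p with
  | nil => exact ⟨[], rfl, by simpa only [pathWeight, pathEnd, future, mul_one] using h⟩
  | cons c w ih =>
    rw [future, Finset.mul_sum] at h
    obtain ⟨q, -, hq⟩ := Finset.exists_ne_zero_of_sum_ne_zero h
    rw [← mul_assoc] at hq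
    obtain ⟨l, rfl, hl⟩ := ih hq
    exact ⟨(c, q) :: l, rfl, by simpa only [pathWeight, pathEnd, mul_assoc] using hl⟩

theorem exists_runWeight_ne_zero_of_behaviour_ne_zero {w : List α} (h : A.behaviour w ≠ 0) :
    ∃ (p : A.Q) (l : List (α × A.Q)), l.map Prod.fst = w ∧ A.runWeight p l ≠ 0 := by
  obtain ⟨p, -, hp⟩ := Finset.exists_ne_zero_of_sum_ne_zero h
  exact ⟨p, exists_pathWeight_ne_zero_of_mul_future_ne_zero hp⟩

theorem Deterministic.future_eq_of_isPath (hA : A.Deterministic) {p : A.Q}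
    {l : List (α × A.Q)} (h : A.IsPath p l) :
    A.future (l.map Prod.fst) p = A.pathWeight p l * A.τ (A.pathEnd p l) := by
  induction l generalizing p with
  | nil => exact (one_mul _).symm
  | cons x l ih =>
    obtain ⟨c, q⟩ := x
    have only_q (r : A.Q) (hr : r ≠ q) : A.σ p c r = 0 :=
      of_not_not fun hσ => hr (hA.2 p c r q hσ h.1)
    calc A.future (c :: l.map Prod.fst) p
        = A.σ p c q * A.future (l.map Prod.fst) q :=
          Fintype.sum_eq_single q fun r hr => by rw [only_q r hr, zero_mul]
      _ = A.pathWeight p ((c, q) :: l) * A.τ (A.pathEnd p ((c, q) :: l)) := by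
          rw [ih h.2, ← mul_assoc, pathWeight, pathEnd]

theorem Deterministic.behaviour_eq_runWeight (hA : A.Deterministic) {p : A.Q}
    {l : List (α × A.Q)} (h : A.runWeight p l ≠ 0) :
    A.behaviour (l.map Prod.fst) = A.runWeight p l := by
  have only_p (q : A.Q) (hq : q ≠ p) : A.ι q = 0 :=
    of_not_not fun hι => hq (hA.1 q p hι (ι_ne_zero_of_runWeight_ne_zero h))
  calc A.behaviour (l.map Prod.fst)
      = A.ι p * A.future (l.map Prod.fst) p :=
        Fintype.sum_eq_single p fun q hq => by rw [only_p q hq, zero_mul]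
    _ = A.runWeight p l := by
        rw [hA.future_eq_of_isPath (isPath_of_runWeight_ne_zero h), ← mul_assoc, runWeight]

theorem exists_pathEnd_eq_of_mem {p q : A.Q} {l : List (α × A.Q)} (h : q ∈ l.map Prod.snd) :
    ∃ l₁ l₂, l₁ ≠ [] ∧ l = l₁ ++ l₂ ∧ A.pathEnd p l₁ = q := by
  obtain ⟨x, hx, rfl⟩ := List.mem_map.1 h
  obtain ⟨l₁, l₂, rfl⟩ := List.append_of_mem hx
  exact ⟨l₁ ++ [x], l₂, by simp, by simp, pathEnd_append p l₁ [x]⟩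

theorem nodup_of_forall_pathEnd_ne {p : A.Q} {l : List (α × A.Q)}
    (h : ∀ l₁ l₂ l₃, l = l₁ ++ l₂ ++ l₃ → l₂ ≠ [] → A.pathEnd p (l₁ ++ l₂) ≠ A.pathEnd p l₁) :
    (p :: l.map Prod.snd).Nodup := by
  induction l generalizing p with
  | nil => exact List.nodup_singleton p
  | cons x l ih =>
    refine List.nodup_cons.2 ⟨fun hp => ?_, ih fun l₁ l₂ l₃ hl => ?_⟩
    · obtain ⟨l₁, l₂, hne, hl, hend⟩ := exists_pathEnd_eq_of_mem (p := p) hp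
      exact h [] l₁ l₂ hl hne hend
    · exact h (x :: l₁) l₂ l₃ (congrArg (x :: ·) hl)

theorem Bideterministic.five_le_states_of_runs (hA : A.Bideterministic) {b c d : α}
    {p q₁ q₂ q₃ p' r q₃' : A.Q} (hrun : A.runWeight p [(c, q₁), (b, q₂), (d, q₃)] ≠ 0)
    (hrun' : A.runWeight p' [(b, r), (b, q₃')] ≠ 0)
    (hnodup : [p, q₁, q₂, q₃].Nodup) (hnodup' : [p', r, q₃'].Nodup) : 5 ≤ A.states := by
  obtain rfl : p = p' :=
    hA.1 p p' (ι_ne_zero_of_runWeight_ne_zero hrun) (ι_ne_zero_of_runWeight_ne_zero hrun')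
  obtain rfl : q₃ = q₃' :=
    hA.2.1 q₃ q₃' (τ_ne_zero_of_runWeight_ne_zero hrun) (τ_ne_zero_of_runWeight_ne_zero hrun')
  obtain ⟨-, hσ₁₂, -⟩ := isPath_of_runWeight_ne_zero hrun
  obtain ⟨hσpr, hσr₃, -⟩ := isPath_of_runWeight_ne_zero hrun'
  have hr₁ : r ≠ q₁ := by
    rintro rfl
    have : q₂ = q₃ := hA.2.2.1 r b q₂ q₃ hσ₁₂ hσr₃
    simp [this] at hnodup
  have hr₂ : r ≠ q₂ := by
    rintro rfl
    have : p = q₁ := hA.2.2.2 p q₁ b r hσpr hσ₁₂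
    simp [this] at hnodup
  have hnodup_all : [p, r, q₁, q₂, q₃].Nodup := by
    simp only [List.nodup_cons, List.mem_cons] at hnodup hnodup' ⊢
    tauto
  exact hnodup_all.length_le_card

end Runs

section LoopRemoval

open scoped List

variable {S : Type} [CommSemiring S] {α : Type} {A : WeightedAutomaton S α}

theorem runWeight_eq_mul_of_loop {p : A.Q} {l₁ l₂ : List (α × A.Q)} (l₃ : List (α × A.Q))
    (h : A.pathEnd p (l₁ ++ l₂) = A.pathEnd p l₁) :
    A.runWeight p (l₁ ++ l₂ ++ l₃) =
      A.pathWeight (A.pathEnd p l₁) l₂ * A.runWeight p (l₁ ++ l₃) := by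
  simp only [runWeight, pathEnd_append _ _ l₃, pathWeight_append, h]
  ring

theorem Deterministic.nodup_of_runWeight_ne_zero (hA : A.Deterministic) {p : A.Q}
    {l : List (α × A.Q)} (hl : A.runWeight p l ≠ 0)
    (hmin : ∀ w, w <+ l.map Prod.fst → A.behaviour w ≠ 0 → w = l.map Prod.fst) :
    (p :: l.map Prod.snd).Nodup := by
  refine nodup_of_forall_pathEnd_ne fun l₁ l₂ l₃ hl_eq hne hloop => hne ?_
  subst hl_eq
  have hcut : A.runWeight p (l₁ ++ l₃) ≠ 0 :=
    right_ne_zero_of_mul (runWeight_eq_mul_of_loop l₃ hloop ▸ hl)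
  have hsub : l₁ ++ l₃ <+ l₁ ++ l₂ ++ l₃ :=
    (List.sublist_append_left l₁ l₂).append_right l₃
  have hword : (l₁ ++ l₃).map Prod.fst = (l₁ ++ l₂ ++ l₃).map Prod.fst :=
    hmin _ (hsub.map _) (hA.behaviour_eq_runWeight hcut ▸ hcut)
  have hlength := congrArg List.length hword
  simp only [List.length_map, List.length_append] at hlength
  exact List.length_eq_zero_iff.1 (by lia)

theorem Deterministic.exists_nodup_run (hA : A.Deterministic) {w : List α}
    (hw : A.behaviour w ≠ 0) (hmin : ∀ v, v <+ w → A.behaviour v ≠ 0 → v = w) :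
    ∃ (p : A.Q) (l : List (α × A.Q)), l.map Prod.fst = w ∧ A.runWeight p l ≠ 0 ∧
      (p :: l.map Prod.snd).Nodup := by
  obtain ⟨p, l, rfl, hl⟩ := exists_runWeight_ne_zero_of_behaviour_ne_zero hw
  exact ⟨p, l, rfl, hl, hA.nodup_of_runWeight_ne_zero hl hmin⟩

theorem Bideterministic.five_le_states (hA : A.Bideterministic) {a b : α} (hab : a ≠ b)
    (haba : A.behaviour [a, b, a] ≠ 0) (hbb : A.behaviour [b, b] ≠ 0)
    (hsupp : ∀ w, A.behaviour w ≠ 0 → w = [a, b, a] ∨ w = [b, b]) :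
    5 ≤ A.states := by
  have hmin_aba (v : List α) (hv : v <+ [a, b, a]) (hne : A.behaviour v ≠ 0) : v = [a, b, a] :=
    (hsupp v hne).resolve_right fun h => by simp [h, List.cons_sublist_cons', hab.symm] at hv
  have hmin_bb (v : List α) (hv : v <+ [b, b]) (hne : A.behaviour v ≠ 0) : v = [b, b] :=
    (hsupp v hne).resolve_left fun h => absurd hv.length_le (by simp [h])
  obtain ⟨p, l, hl, hrun, hnodup⟩ := hA.deterministic.exists_nodup_run haba hmin_aba
  obtain ⟨p', l', hl', hrun', hnodup'⟩ := hA.deterministic.exists_nodup_run hbb hmin_bb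
  simp only [List.map_eq_cons_iff, List.map_eq_nil_iff] at hl hl'
  obtain ⟨⟨_, q₁⟩, _, rfl, rfl, ⟨_, q₂⟩, _, rfl, rfl, ⟨_, q₃⟩, _, rfl, rfl, rfl⟩ := hl
  obtain ⟨⟨_, r⟩, _, rfl, rfl, ⟨_, q₃'⟩, _, rfl, rfl, rfl⟩ := hl'
  exact hA.five_le_states_of_runs hrun hrun' hnodup hnodup'

end LoopRemoval

section FourStates

variable {S : Type} [Semiring S] {α : Type} [DecidableEq α]

/-- The four-state automaton whose runs from state `0` to state `3` are `0 → 1 → 2 → 3` and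
`0 → 2 → 3`: upon `a` the transitions are `0 → 1` and `2 → 3`, of weights `s` and `t`; upon `b`
they are `0 → 2`, `1 → 2` and `2 → 3`, of weights `s'`, `1` and `t'`. -/
def fourStateAutomaton (a b : α) (s t s' t' : S) : WeightedAutomaton S α where
  Q := Fin 4
  σ p c q :=
    if c = a then !![0, s, 0, 0; 0, 0, 0, 0; 0, 0, 0, t; 0, 0, 0, 0] p q
    else if c = b then !![0, 0, s', 0; 0, 0, 1, 0; 0, 0, 0, t'; 0, 0, 0, 0] p q
    else 0
  ι := ![1, 0, 0, 0]
  τ := ![0, 0, 0, 1]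

variable {a b : α} {s t s' t' : S}

theorem fourStateAutomaton_future_cons (c : α) (w : List α) (q : Fin 4) :
    (fourStateAutomaton a b s t s' t').future (c :: w) q =
      ∑ p : Fin 4, (fourStateAutomaton a b s t s' t').σ q c p *
        (fourStateAutomaton a b s t s' t').future w p :=
  rfl

theorem fourStateAutomaton_future_three (w : List α) :
    (fourStateAutomaton a b s t s' t').future w (3 : Fin 4) = if w = [] then 1 else 0 := by
  rcases w with _ | ⟨c, w⟩
  · rfl
  · rw [fourStateAutomaton_future_cons]
    simp [fourStateAutomaton, Fin.sum_univ_four]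

theorem fourStateAutomaton_future_two (hab : a ≠ b) (w : List α) :
    (fourStateAutomaton a b s t s' t').future w (2 : Fin 4) =
      if w = [a] then t else if w = [b] then t' else 0 := by
  rcases w with _ | ⟨c, w⟩
  · rfl
  · rw [fourStateAutomaton_future_cons, Fin.sum_univ_four, fourStateAutomaton_future_three]
    rcases eq_or_ne c a with rfl | hca
    · simp [fourStateAutomaton, hab]
    · rcases eq_or_ne c b with rfl | hcb <;> simp [fourStateAutomaton, *]

theorem fourStateAutomaton_future_one (hab : a ≠ b) (w : List α) :
    (fourStateAutomaton a b s t s' t').future w (1 : Fin 4) =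
      if w = [b, a] then t else if w = [b, b] then t' else 0 := by
  rcases w with _ | ⟨c, w⟩
  · rfl
  · rw [fourStateAutomaton_future_cons, Fin.sum_univ_four, fourStateAutomaton_future_two hab]
    rcases eq_or_ne c a with rfl | hca
    · simp [fourStateAutomaton, hab]
    · rcases eq_or_ne c b with rfl | hcb <;> simp [fourStateAutomaton, *]

theorem fourStateAutomaton_future_zero (hab : a ≠ b) (hst' : s * t' = 0) (hs't : s' * t = 0)
    (w : List α) :
    (fourStateAutomaton a b s t s' t').future w (0 : Fin 4) =
      if w = [a, b, a] then s * t else if w = [b, b] then s' * t' else 0 := by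
  rcases w with _ | ⟨c, w⟩
  · rfl
  · rw [fourStateAutomaton_future_cons, Fin.sum_univ_four, fourStateAutomaton_future_one hab,
      fourStateAutomaton_future_two hab]
    rcases eq_or_ne c a with rfl | hca
    · simp [fourStateAutomaton, hab, hst']
    · rcases eq_or_ne c b with rfl | hcb <;> simp +contextual [fourStateAutomaton, *]

theorem fourStateAutomaton_behaviour (hab : a ≠ b) (hst' : s * t' = 0) (hs't : s' * t = 0)
    (w : List α) :
    (fourStateAutomaton a b s t s' t').behaviour w =
      if w = [a, b, a] then s * t else if w = [b, b] then s' * t' else 0 := by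
  refine (Fin.sum_univ_four _).trans ?_
  rw [fourStateAutomaton_future_zero hab hst' hs't]
  simp [fourStateAutomaton]

end FourStates

end WeightedAutomaton

theorem four_state_realisable_but_bideterministic_needs_five_general
    {S : Type} [CommSemiring S] {α : Type} [DecidableEq α] {a b : α} (hab : a ≠ b)
    (s t s' t' : S)
    (h1 : s * t ≠ 0) (h2 : s' * t' ≠ 0) (h3 : s * t' = 0) (h4 : s' * t = 0) :
    (∃ A : WeightedAutomaton S α, A.states = 4 ∧
        A.behaviour = fun w =>
          if w = [a, b, a] then s * t else if w = [b, b] then s' * t' else 0) ∧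
    (∀ B : WeightedAutomaton S α, B.Bideterministic →
        (B.behaviour = fun w =>
          if w = [a, b, a] then s * t else if w = [b, b] then s' * t' else 0) →
        5 ≤ B.states) := by
  refine ⟨⟨.fourStateAutomaton a b s t s' t', Fintype.card_fin 4,
    funext (WeightedAutomaton.fourStateAutomaton_behaviour hab h3 h4)⟩,
    fun B hB hbehaviour => hB.five_le_states hab ?_ ?_ fun w hw => ?_⟩
  · simpa [hbehaviour] using h1
  · simpa [hbehaviour] using h2
  · contrapose! hw
    simp [hbehaviour, hw]

/-- Over a commutative semiring with elements `s, t, s', t'` such that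
`s*t ≠ 0 ≠ s'*t'` and `s*t' = 0 = s'*t`, the series over the two-letter
alphabet `Bool` (with letters `a = false` and `b = true`) sending `aba` to
`s*t`, `bb` to `s'*t'` and every other word to `0` is realised by a weighted
automaton with exactly `4` states, while every bideterministic weighted
automaton realising it has at least `5` states. -/
theorem four_state_realisable_but_bideterministic_needs_five
    {S : Type} [CommSemiring S] (s t s' t' : S)
    (h1 : s * t ≠ 0) (h2 : s' * t' ≠ 0) (h3 : s * t' = 0) (h4 : s' * t = 0) :
    (∃ A : WeightedAutomaton S Bool, A.states = 4 ∧
        A.behaviour = fun w =>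
          if w = [false, true, false] then s * t
          else if w = [true, true] then s' * t' else 0) ∧
    (∀ B : WeightedAutomaton S Bool, B.Bideterministic →
        (B.behaviour = fun w =>
          if w = [false, true, false] then s * t
          else if w = [true, true] then s' * t' else 0) →
        5 ≤ B.states) :=
  four_state_realisable_but_bideterministic_needs_five_general
    Bool.false_ne_true s t s' t' h1 h2 h3 h4
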